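/- For a monoid S and nonempty sets J, I with an injection J → I, if the right S-act S^I is indecomposable then S^J is indecomposable. -/

import Mathlib

/-- `act` is a (unital, associative) right `S`-action on `A`. -/
def IsRAct (S : Type*) [Monoid S] {A : Type*} (act : A → S → A) : Prop :=
  (∀ (a : A) (s t : S), act (act a s) t = act a (s * t)) ∧ ∀ a : A, act a 1 = a

/-- `B` is a subact: a nonempty subset closed under the action. -/
def IsSubact {S A : Type*} (act : A → S → A) (B : Set A) : Prop :=
  B.Nonempty ∧ ∀ a ∈ B, ∀ s : S, act a s ∈ B

/-- An act is indecomposable if it is not the disjoint union of two subacts. -/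
def Indecomp {S A : Type*} (act : A → S → A) : Prop :=
  ¬ ∃ B C : Set A, IsSubact act B ∧ IsSubact act C ∧ B ∩ C = ∅ ∧ B ∪ C = Set.univ

/-- `S` is left reversible: any two principal (hence any two) right ideals intersect. -/
def LeftReversible (S : Type*) [Monoid S] : Prop :=
  ∀ a b : S, ∃ u v : S, a * u = b * v

/-- A scheme of length `n ≥ 1` connecting `a` to `b`:
`a = a₁s₁, aᵢtᵢ = aᵢ₊₁sᵢ₊₁ (1 ≤ i < n), aₙtₙ = b` (1-indexed). -/
def SchemeOfLength {S A : Type*} [Monoid S] (act : A → S → A) (n : ℕ) (a b : A) : Prop :=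
  ∃ (c : ℕ → A) (s t : ℕ → S),
    a = act (c 1) (s 1) ∧
    (∀ i, 1 ≤ i → i < n → act (c i) (t i) = act (c (i + 1)) (s (i + 1))) ∧
    act (c n) (t n) = b

/-- The preimage of a subact under a surjective act homomorphism is a subact. -/
theorem IsSubact.preimage {S A A' : Type*} {act : A → S → A} {act' : A' → S → A'}
    {φ : A → A'} {B : Set A'} (hB : IsSubact act' B) (hφ : Function.Surjective φ)
    (hact : ∀ a s, φ (act a s) = act' (φ a) s) : IsSubact act (φ ⁻¹' B) :=
  ⟨hB.1.preimage hφ, fun a ha s => by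
    rw [Set.mem_preimage, hact]
    exact hB.2 _ ha s⟩

/-- A homomorphic image of an indecomposable act is indecomposable. -/
theorem Indecomp.of_surjective {S A A' : Type*} {act : A → S → A} {act' : A' → S → A'}
    (h : Indecomp act) {φ : A → A'} (hφ : Function.Surjective φ)
    (hact : ∀ a s, φ (act a s) = act' (φ a) s) : Indecomp act' := by
  rintro ⟨B, C, hB, hC, hBC, hU⟩
  refine h ⟨φ ⁻¹' B, φ ⁻¹' C, hB.preimage hφ hact, hC.preimage hφ hact, ?_, ?_⟩
  · rw [← Set.preimage_inter, hBC, Set.preimage_empty]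
  · rw [← Set.preimage_union, hU, Set.preimage_univ]

theorem stmt8 (S : Type*) [Monoid S] (I J : Type*) [Nonempty I] [Nonempty J]
    (f : J → I) (hf : Function.Injective f)
    (h : Indecomp (fun (g : I → S) (s : S) => fun i => g i * s)) :
    Indecomp (fun (g : J → S) (s : S) => fun j => g j * s) :=
  h.of_surjective (φ := fun g => g ∘ f) hf.surjective_comp_right fun _ _ => rfl
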